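/- arXiv:1904.08557 — 3 statements merged into one kernel-verified Lean document; each statement's English description precedes it below -/
import Mathlib

section
/- Let Δt > 0, b > 0 and h_min ∈ ℝ. For v ≥ 0 let V_v be the clamped braking velocity sequence V_v(0) = v, V_v(k+1) = max(0, V_v(k) − b·Δt), and let D_v(k) := Δt · Σ_{j=0}^{k−1} (V_v(j) + V_v(j+1))/2. Suppose a lead vehicle with initial velocity v_l ≥ 0 and a following vehicle with initial velocity v_f satisfying 0 ≤ v_f ≤ v_l both brake at maximum deceleration, so the headway after k steps is h(k) := h(0) + D_{v_l}(k) − D_{v_f}(k). If h(0) ≥ h_min, then h(k) is nondecreasing in k and h(k) ≥ h_min for all k ∈ ℕ; in particular, any state (h, v_f, v_l) with v_f ≤ v_l and h ≥ h_min belongs to the safe set C := {(h, v_f, v_l) : ∀k ∈ ℕ, h + D_{v_l}(k) − D_{v_f}(k) ≥ h_min}. -/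
/-- The clamped braking velocity sequence: `V_v(0) = v`, `V_v(k+1) = max(0, V_v(k) − b·Δt)`. -/
def clampedBrake (b Δt v : ℝ) : ℕ → ℝ
  | 0 => v
  | k + 1 => max 0 (clampedBrake b Δt v k - b * Δt)

/-- The braking displacement after `k` steps: `D_v(k) = Δt · Σ_{j<k} (V_v(j) + V_v(j+1))/2`. -/
noncomputable def brakeDisp (b Δt v : ℝ) (k : ℕ) : ℝ :=
  Δt * ∑ j ∈ Finset.range k, (clampedBrake b Δt v j + clampedBrake b Δt v (j + 1)) / 2

/-- If a lead vehicle with initial velocity `v_l` and a follower with initial velocity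
`v_f`, with `0 ≤ v_f ≤ v_l`, both brake at the maximum rate, then the headway
`h(k) = h(0) + D_{v_l}(k) − D_{v_f}(k)` is nondecreasing in `k`; hence if `h(0) ≥ h_min`
then `h(k) ≥ h_min` for all `k`, i.e. the state belongs to the safe set `C`. -/
theorem headway_stays_safe_of_slower_follower
    (Δt b hmin : ℝ) (hΔt : 0 < Δt) (hb : 0 < b)
    (vf vl h0 : ℝ) (hvf : 0 ≤ vf) (hvfl : vf ≤ vl) (hh0 : hmin ≤ h0) :
    Monotone (fun k : ℕ => h0 + brakeDisp b Δt vl k - brakeDisp b Δt vf k) ∧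
      ∀ k : ℕ, hmin ≤ h0 + brakeDisp b Δt vl k - brakeDisp b Δt vf k := by
  have hV : ∀ k, clampedBrake b Δt vf k ≤ clampedBrake b Δt vl k := by
    intro k
    induction k with
    | zero => simpa [clampedBrake] using hvfl
    | succ k ih =>
      simp only [clampedBrake]
      exact max_le_max le_rfl (by linarith)
  have hm : Monotone (fun k : ℕ => h0 + brakeDisp b Δt vl k - brakeDisp b Δt vf k) := by
    apply monotone_nat_of_le_succ
    intro k
    simp only [brakeDisp, Finset.sum_range_succ, mul_add]
    have h1 := hV k
    have h2 := hV (k + 1)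
    have h3 := mul_le_mul_of_nonneg_left
      (show (clampedBrake b Δt vf k + clampedBrake b Δt vf (k + 1)) / 2 ≤
        (clampedBrake b Δt vl k + clampedBrake b Δt vl (k + 1)) / 2 by linarith) hΔt.le
    linarith
  refine ⟨hm, fun k => ?_⟩
  have h := hm (Nat.zero_le k)
  simp only [brakeDisp, Finset.range_zero, Finset.sum_empty, mul_zero] at h ⊢
  linarith
end

section
/- Let b > 0, h_min ∈ ℝ, and v_f, v_l ≥ 0, h₀ ∈ ℝ. For v ≥ 0 define the continuous-time braking displacement s_v(t) := v·t − (b/2)·t² for 0 ≤ t ≤ v/b and s_v(t) := v²/(2b) for t ≥ v/b. Then the headway under simultaneous maximum braking satisfies inf_{t ≥ 0} [h₀ + s_{v_l}(t) − s_{v_f}(t)] = h₀ − max(0, (v_f² − v_l²)/(2b)), and this infimum is attained. Consequently, h₀ + s_{v_l}(t) − s_{v_f}(t) ≥ h_min for all t ≥ 0 if and only if h₀ ≥ h_min + max(0, (v_f² − v_l²)/(2b)). -/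
/-- Continuous-time braking displacement: a vehicle braking at constant deceleration `b` from
initial velocity `v` travels `v·t − (b/2)·t²` until it stops at time `v/b`, after which its
displacement is constant and equal to `v²/(2b)`. -/
noncomputable def ctsBrakeDisp (b v t : ℝ) : ℝ :=
  if t ≤ v / b then v * t - (b / 2) * t ^ 2 else v ^ 2 / (2 * b)

theorem ctsBrakeDisp_eq_aux (b v t : ℝ) (hb : 0 < b) :
    ctsBrakeDisp b v t = (v ^ 2 - (max 0 (v - b * t)) ^ 2) / (2 * b) := by
  unfold ctsBrakeDisp
  split_ifs with h
  · rw [le_div_iff₀ hb] at h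
    rw [max_eq_right (by linarith)]
    field_simp
    ring
  · rw [le_div_iff₀ hb] at h
    rw [max_eq_left (by linarith)]
    ring

/-- Under simultaneous maximum braking of a lead vehicle (initial velocity `v_l`) and a
follower (initial velocity `v_f`), initially `h₀` apart, the headway
`h₀ + s_{v_l}(t) − s_{v_f}(t)` attains its infimum over `t ≥ 0`, which equals
`h₀ − max(0, (v_f² − v_l²)/(2b))`; consequently the headway stays at least `h_min` for all
`t ≥ 0` if and only if `h₀ ≥ h_min + max(0, (v_f² − v_l²)/(2b))`. -/
theorem headway_infimum_under_simultaneous_braking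
    (b hmin : ℝ) (hb : 0 < b)
    (vf vl : ℝ) (hvf : 0 ≤ vf) (hvl : 0 ≤ vl) (h₀ : ℝ) :
    IsLeast {x : ℝ | ∃ t : ℝ, 0 ≤ t ∧ x = h₀ + ctsBrakeDisp b vl t - ctsBrakeDisp b vf t}
        (h₀ - max 0 ((vf ^ 2 - vl ^ 2) / (2 * b))) ∧
      ((∀ t : ℝ, 0 ≤ t → hmin ≤ h₀ + ctsBrakeDisp b vl t - ctsBrakeDisp b vf t) ↔
        hmin + max 0 ((vf ^ 2 - vl ^ 2) / (2 * b)) ≤ h₀) := by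
  have key : IsLeast {x : ℝ | ∃ t : ℝ, 0 ≤ t ∧
      x = h₀ + ctsBrakeDisp b vl t - ctsBrakeDisp b vf t}
        (h₀ - max 0 ((vf ^ 2 - vl ^ 2) / (2 * b))) := by
    have h2b : 0 < 2 * b := by linarith
    rcases le_total vf vl with h | h
    · have hm : max 0 ((vf ^ 2 - vl ^ 2) / (2 * b)) = 0 :=
        max_eq_left (div_nonpos_of_nonpos_of_nonneg (by nlinarith) h2b.le)
      rw [hm]
      constructor
      · refine ⟨0, le_rfl, ?_⟩
        simp only [ctsBrakeDisp_eq_aux b _ _ hb, mul_zero, sub_zero, max_eq_right hvf,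
          max_eq_right hvl, sub_self, zero_div, add_zero]
      · rintro x ⟨t, ht, rfl⟩
        simp only [ctsBrakeDisp_eq_aux b _ _ hb]
        have hbt : 0 ≤ b * t := by positivity
        have : (vf ^ 2 - (max 0 (vf - b * t)) ^ 2) / (2 * b)
            ≤ (vl ^ 2 - (max 0 (vl - b * t)) ^ 2) / (2 * b) := by
          apply div_le_div_of_nonneg_right _ h2b.le
          rcases max_cases 0 (vf - b * t) with ⟨e, _⟩ | ⟨e, _⟩ <;>
          rcases max_cases 0 (vl - b * t) with ⟨e', _⟩ | ⟨e', _⟩ <;>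
          rw [e, e'] <;> nlinarith
        linarith
    · have hm : max 0 ((vf ^ 2 - vl ^ 2) / (2 * b)) = (vf ^ 2 - vl ^ 2) / (2 * b) :=
        max_eq_right (div_nonneg (by nlinarith) h2b.le)
      rw [hm]
      constructor
      · refine ⟨vf / b, by positivity, ?_⟩
        simp only [ctsBrakeDisp_eq_aux b _ _ hb]
        rw [mul_div_cancel₀ vf hb.ne', max_eq_left (by linarith : vl - vf ≤ 0), sub_self, max_self]
        ring
      · rintro x ⟨t, ht, rfl⟩
        simp only [ctsBrakeDisp_eq_aux b _ _ hb]
        have h1 : max 0 (vl - b * t) ≤ max 0 (vf - b * t) :=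
          max_le_max le_rfl (by linarith)
        have h2 := pow_le_pow_left₀ (le_max_left 0 (vl - b * t)) h1 2
        have h3 := div_le_div_of_nonneg_right h2 h2b.le
        simp only [sub_div]
        linarith
  refine ⟨key, ?_, ?_⟩
  · intro H
    obtain ⟨t, ht, e⟩ := key.1
    have := H t ht
    linarith
  · intro H t ht
    have := key.2 ⟨t, ht, rfl⟩
    linarith
end

section
/- Let Δt > 0, b > 0 and h_min ∈ ℝ. For v ≥ 0 let V_v be the clamped braking velocity sequence V_v(0) = v, V_v(k+1) = max(0, V_v(k) − b·Δt), and let D_v(k) := Δt · Σ_{j=0}^{k−1} (V_v(j) + V_v(j+1))/2. Define the safe set C := {(h, v_f, v_l) ∈ ℝ × [0,∞) × [0,∞) : ∀k ∈ ℕ, h + D_{v_l}(k) − D_{v_f}(k) ≥ h_min}. Suppose (h, v_f, v_l) ∈ C, the follower applies maximum braking for one step, giving new velocity v_f′ := max(0, v_f − b·Δt), and the lead vehicle moves to any new velocity v_l′ with v_l′ ≥ max(0, v_l − b·Δt) (i.e., the lead decelerates no harder than the maximum rate b), with new headway h′ := h + Δt·(v_l + v_l′)/2 − Δt·(v_f +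 v_f′)/2. Then (h′, v_f′, v_l′) ∈ C. In particular, membership in the safe set is preserved under one closed-loop step in which the follower brakes maximally, so the minimum-distance constraint h ≥ h_min can be persistently satisfied from any state in C. -/
/-- The safe set `C ⊆ ℝ × [0,∞) × [0,∞)` of headway/velocity configurations from which the
headway stays at least `h_min` for all future steps when both vehicles brake maximally. -/
def safeSet (b Δt hmin : ℝ) : Set (ℝ × ℝ × ℝ) :=
  {x | 0 ≤ x.2.1 ∧ 0 ≤ x.2.2 ∧
    ∀ k : ℕ, hmin ≤ x.1 + brakeDisp b Δt x.2.2 k - brakeDisp b Δt x.2.1 k}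

theorem clampedBrake_shift (b Δt v : ℝ) (j : ℕ) :
    clampedBrake b Δt (max 0 (v - b * Δt)) j = clampedBrake b Δt v (j + 1) := by
  induction j with
  | zero => rfl
  | succ k ih =>
    rw [clampedBrake, ih]
    rfl

theorem clampedBrake_le (b Δt v w : ℝ) (hvw : v ≤ w) (j : ℕ) :
    clampedBrake b Δt v j ≤ clampedBrake b Δt w j := by
  induction j with
  | zero => exact hvw
  | succ k ih =>
    rw [clampedBrake, clampedBrake]
    exact max_le_max le_rfl (by linarith)

theorem brakeDisp_le (b Δt v w : ℝ) (hΔt : 0 < Δt) (hvw : v ≤ w) (k : ℕ) :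
    brakeDisp b Δt v k ≤ brakeDisp b Δt w k := by
  unfold brakeDisp
  refine mul_le_mul_of_nonneg_left (Finset.sum_le_sum fun j _ => ?_) hΔt.le
  have h1 := clampedBrake_le b Δt v w hvw j
  have h2 := clampedBrake_le b Δt v w hvw (j + 1)
  linarith

theorem brakeDisp_succ' (b Δt v : ℝ) (k : ℕ) :
    brakeDisp b Δt v (k + 1) =
      Δt * (v + max 0 (v - b * Δt)) / 2 + brakeDisp b Δt (max 0 (v - b * Δt)) k := by
  unfold brakeDisp
  rw [Finset.sum_range_succ']
  simp only [clampedBrake_shift]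
  simp only [clampedBrake]
  ring

/-- Persistent feasibility: if `(h, v_f, v_l)` lies in the safe set, the follower applies
maximum braking for one step (`v_f′ = max(0, v_f − b·Δt)`), and the lead vehicle decelerates
no harder than the maximum rate (`v_l′ ≥ max(0, v_l − b·Δt)`), with the headway updated
trapezoidally to `h′ = h + Δt·(v_l + v_l′)/2 − Δt·(v_f + v_f′)/2`, then `(h′, v_f′, v_l′)`
again lies in the safe set; so the minimum-distance constraint `h ≥ h_min` can be
persistently satisfied from any state in `C`. -/
theorem safeSet_closedLoop_invariant
    (Δt b hmin : ℝ) (hΔt : 0 < Δt) (hb : 0 < b)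
    (h vf vl : ℝ) (hmem : (h, vf, vl) ∈ safeSet b Δt hmin)
    (vf' : ℝ) (hvf' : vf' = max 0 (vf - b * Δt))
    (vl' : ℝ) (hvl' : max 0 (vl - b * Δt) ≤ vl')
    (h' : ℝ) (hh' : h' = h + Δt * (vl + vl') / 2 - Δt * (vf + vf') / 2) :
    (h', vf', vl') ∈ safeSet b Δt hmin := by
  obtain ⟨_, _, hk⟩ := hmem
  refine ⟨?_, le_trans (le_max_left _ _) hvl', fun k => ?_⟩
  · show 0 ≤ vf'
    rw [hvf']
    exact le_max_left _ _
  · have h1 := hk (k + 1)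
    have h2 := brakeDisp_le b Δt _ _ hΔt hvl' k
    have h3 := mul_le_mul_of_nonneg_left hvl' hΔt.le
    simp only [brakeDisp_succ'] at h1
    show hmin ≤ h' + brakeDisp b Δt vl' k - brakeDisp b Δt vf' k
    rw [← hvf'] at h1
    rw [hh']
    linarith
end
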